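/- For every ε > 0 there exists N such that for all n ≥ N there exists an NFA with exactly n states over an alphabet with 15 letters such that the NFA has a universal length and its minimal universality length is at least exp((1 − ε)·2^(n/11)). -/

import Mathlib

/-- `ℓ` is a universal length for the language `L`: every word of length `ℓ` belongs to `L`. -/
def IsUnivLength {α : Type*} (L : Language α) (ℓ : ℕ) : Prop :=
  ∀ w : List α, w.length = ℓ → w ∈ L

namespace UnivLen

theorem L1 (x t : ℕ) : decide (x % 2^(t+1) = 0) = (decide (x % 2^t = 0) && !x.testBit t) := by
  rw [Nat.testBit_eq_decide_div_mod_eq, pow_succ, Nat.mod_mul]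
  have hp : 0 < 2^t := by positivity
  rcases Nat.mod_two_eq_zero_or_one (x / 2^t) with h | h <;> simp [h]
theorem L2 (x t : ℕ) (hx : 1 ≤ x) : (x-1).testBit t = xor (x.testBit t) (decide (x % 2^t = 0)) := by
  induction t generalizing x with
  | zero => simp [Nat.mod_one, Nat.testBit_zero]; rcases Nat.mod_two_eq_zero_or_one x with h | h <;> simp [h] <;> omega
  | succ t ih =>
    rw [Nat.testBit_succ, Nat.testBit_succ]
    have e : (x % 2^(t+1) = 0) ↔ (x % 2 = 0 ∧ x / 2 % 2^t = 0) := by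
      rw [pow_succ', Nat.mod_mul]; omega
    simp only [e]
    rcases Nat.mod_two_eq_zero_or_one x with h | h
    · have : (x-1)/2 = x/2 - 1 := by omega
      rw [this, ih _ (by omega)]; simp [h]
    · have : (x-1)/2 = x/2 := by omega
      rw [this]; simp [h]
theorem lcmBound (k L : ℕ) (hk : 1 ≤ k) (hL : 0 < L) (h : ∀ m, 1 ≤ m → m ≤ 2^k → m ∣ L) : 2^(2^k) ≤ 2^k * L := by
  obtain ⟨j, rfl⟩ : ∃ j, k = j+1 := ⟨k-1, by omega⟩
  have hd : Nat.centralBinom (2^j) ∣ L := by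
    rw [← Nat.factorization_prime_le_iff_dvd (Nat.centralBinom_ne_zero _) hL.ne']
    intro p hp
    rw [← hp.pow_dvd_iff_le_factorization hL.ne']
    apply h _ (Nat.pos_of_ne_zero (pow_ne_zero _ hp.ne_zero))
    rw [Nat.centralBinom, pow_succ']
    exact Nat.pow_factorization_choose_le (by positivity)
  have h1 := Nat.four_pow_le_two_mul_self_mul_centralBinom (2^j) (by positivity)
  calc 2^(2^(j+1)) = 4^(2^j) := by rw [pow_succ', pow_mul]; norm_num
    _ ≤ 2 * 2^j * Nat.centralBinom (2^j) := h1
    _ ≤ 2 * 2^j * L := Nat.mul_le_mul_left _ (Nat.le_of_dvd hL hd)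
    _ = _ := by rw [pow_succ']
theorem realBound (n k L : ℕ) (ε : ℝ) (hε : 0 < ε) (hk : 3 ≤ k) (hn : n ≤ 11 * (k-2)) (h : 2^(2^k) ≤ 2^k * L) :
   Real.exp ((1 - ε) * (2 : ℝ) ^ ((n : ℝ) / 11)) ≤ (L:ℝ) := by
  have h0 : (2:ℝ) ^ ((n : ℝ) / 11) ≤ 2^(k-2) := by
    rw [← Real.rpow_natCast]
    apply Real.rpow_le_rpow_of_exponent_le (by norm_num)
    have : (n:ℝ) ≤ 11 * ((k-2 : ℕ):ℝ) := by exact_mod_cast hn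
    linarith
  have hp : (0:ℝ) < (2:ℝ) ^ ((n : ℝ) / 11) := by positivity
  have h1 : (1 - ε) * (2 : ℝ) ^ ((n : ℝ) / 11) ≤ 2^(k-2) := by nlinarith
  have h2 : 2^(2^(k-1)) ≤ L := by
    have e : 2^k = 2^(k-1) + 2^(k-1) := by rw [← two_mul, ← pow_succ']; congr; omega
    have hkk : k ≤ 2^(k-1) := by have := Nat.lt_two_pow_self (n := k-1); omega
    have : 2^k * 2^(2^(k-1)) ≤ 2^k * L := by
      refine le_trans ?_ h
      rw [← pow_add]
      apply Nat.pow_le_pow_right (by norm_num)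
      omega
    exact Nat.le_of_mul_le_mul_left this (by positivity)
  have h3 : Real.exp ((2:ℝ)^(k-2)) ≤ (2:ℝ)^(2^(k-1)) := by
    have e2 : (2:ℝ)^(2^(k-1)) = Real.exp (((2^(k-1) : ℕ) : ℝ) * Real.log 2) := by
      rw [Real.exp_nat_mul, Real.exp_log (by norm_num)]
    rw [e2]
    apply Real.exp_le_exp.2
    have : (2:ℝ)^(k-1) = 2 * 2^(k-2) := by rw [← pow_succ']; congr 1; omega
    push_cast
    rw [this]
    have := Real.log_two_gt_d9
    have h4 : (0:ℝ) < 2^(k-2) := by positivity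
    nlinarith
  calc _ ≤ Real.exp ((2:ℝ)^(k-2)) := Real.exp_le_exp.2 h1
    _ ≤ _ := h3
    _ ≤ L := by exact_mod_cast h2


/-- letters: delimiters and (counter bit or reload mark, modulus bit, borrow) -/
abbrev A := Bool ⊕ (Option Bool × Bool × Bool)

def rel1 : A → A → Prop
  | .inl _, .inl _ => False
  | .inl s, .inr (o, _, b) => o.isNone = s ∧ b = true
  | .inr (o, p, b), .inl s => s = (b && !(o.getD p))
  | .inr (o, p, b), .inr (o', _, b') => o'.isNone = o.isNone ∧ b' = (b && !(o.getD p))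

abbrev T := Option (Bool × Bool)

def cls : A → T
  | .inl _ => none
  | .inr (o, p, b) => some (xor (o.getD p) b, p)

def relT : T → A → Prop
  | none, .inl _ => True
  | some (c, p), .inr (o', p', _) => p' = p ∧ (o' = none ∨ o' = some c)
  | _, _ => False

def isD : A → Prop
  | .inl _ => True
  | .inr _ => False

def pbit : A → Bool
  | .inl _ => false
  | .inr (_, p, _) => p

theorem rel_unique {a x y : A} {t : T} (h1 : rel1 a x) (h2 : relT t x) (h3 : rel1 a y)
    (h4 : relT t y) : x = y := by
  rcases a with s | ⟨o, p, b⟩ <;> rcases x with sx | ⟨ox, px, bx⟩ <;>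
    rcases y with sy | ⟨oy, py, bY⟩ <;> rcases t with _ | ⟨tc, tp⟩ <;>
    simp_all [rel1, relT] <;>
    · rcases ox with _ | _ <;> rcases oy with _ | _ <;> simp_all

theorem rel_unique' {a x y : A} (h1 : rel1 a x) (h3 : rel1 a y) (ha : a = .inl true ∨ ∃ p b, a = .inr (none, p, b))
    (hx : ¬ isD x) (hy : ¬ isD y) (hp : pbit x = pbit y) : x = y := by
  rcases ha with rfl | ⟨p, b, rfl⟩ <;> rcases x with sx | ⟨ox, px, bx⟩ <;>
    rcases y with sy | ⟨oy, py, bY⟩ <;>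
    simp_all [rel1, isD, pbit]

/-- canonical block letter -/
def B (p q j : ℕ) : A :=
  if j = 0 then .inl (decide (q % (p+1) = 0))
  else .inr (if q % (p+1) = 0 then none else some ((p - q % (p+1)).testBit (j-1)), p.testBit (j-1),
    decide ((p - q % (p+1)) % 2^(j-1) = 0))

def V (k p i : ℕ) : A := B p (i / (k+1)) (i % (k+1))

theorem getD_eq (p q j : ℕ) : (if q % (p+1) = 0 then none else some ((p - q % (p+1)).testBit j)).getD (p.testBit j)
   = (p - q % (p+1)).testBit j := by
  split_ifs with h <;> simp [h]

theorem B_rel1_succ (p q j : ℕ) : rel1 (B p q j) (B p q (j+1)) := by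
  rcases j with _ | j
  · simp only [B, rel1]
    split_ifs <;> simp_all [rel1, Nat.mod_one]
  · simp only [B, rel1, if_neg (Nat.succ_ne_zero _), Nat.add_sub_cancel]
    rw [getD_eq]
    refine ⟨?_, L1 _ _⟩
    split_ifs <;> rfl

theorem mod_cases (p q : ℕ) : (q % (p+1) = p ∧ (q+1) % (p+1) = 0) ∨
    (q % (p+1) < p ∧ (q+1) % (p+1) = q % (p+1) + 1) := by
  have h := Nat.mod_lt q (Nat.succ_pos p)
  rw [Nat.succ_eq_add_one] at h
  rw [← Nat.mod_add_mod q (p+1) 1]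
  rcases Nat.lt_or_ge (q % (p+1)) p with h1 | h1
  · exact Or.inr ⟨h1, Nat.mod_eq_of_lt (by omega)⟩
  · have h2 : q % (p+1) = p := by omega
    exact Or.inl ⟨h2, by rw [h2, Nat.mod_self]⟩

theorem B_rel1_last (k p q : ℕ) (hk : 1 ≤ k) (hp : p < 2^k) : rel1 (B p q k) (B p (q+1) 0) := by
  obtain ⟨j, rfl⟩ : ∃ j, k = j+1 := ⟨k-1, by omega⟩
  simp only [B, rel1, if_neg (Nat.succ_ne_zero _), Nat.add_sub_cancel, if_true]
  have hm := mod_cases p q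
  rw [getD_eq, ← L1, Nat.mod_eq_of_lt (lt_of_le_of_lt (Nat.sub_le _ _) hp)]
  have e : (q+1) % (p+1) = 0 ↔ p - q % (p+1) = 0 := by omega
  simp only [e]

theorem B_relT (p q j : ℕ) : relT (cls (B p q j)) (B p (q+1) j) := by
  rcases j with _ | j
  · simp [B, relT, cls]
  · simp only [B, relT, cls, if_neg (Nat.succ_ne_zero _), Nat.add_sub_cancel]
    rw [getD_eq]
    refine ⟨trivial, ?_⟩
    by_cases h : (q+1) % (p+1) = 0
    · simp [h]
    · right
      rw [if_neg h]
      have hm := mod_cases p q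
      rw [← L2 _ _ (by omega)]
      congr 2
      omega

theorem V_block (k p q j : ℕ) (hj : j < k+1) : V k p (q*(k+1)+j) = B p q j := by
  unfold V
  rw [Nat.add_comm, Nat.add_mul_div_right _ _ (Nat.succ_pos k), Nat.add_mul_mod_self_right,
    Nat.div_eq_of_lt hj, Nat.mod_eq_of_lt hj, Nat.zero_add]

theorem split_i (k i : ℕ) : ∃ q j, j < k+1 ∧ i = q*(k+1)+j :=
  ⟨i/(k+1), i%(k+1), Nat.mod_lt _ (Nat.succ_pos k), (Nat.div_add_mod' i (k+1)).symm⟩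

theorem V_rel1 (k p i : ℕ) (hk : 1 ≤ k) (hp : p < 2^k) : rel1 (V k p i) (V k p (i+1)) := by
  obtain ⟨q, j, hj, rfl⟩ := split_i k i
  rw [V_block _ _ _ _ hj]
  by_cases h : j + 1 < k + 1
  · rw [Nat.add_assoc, V_block _ _ _ _ h]
    exact B_rel1_succ _ _ _
  · obtain rfl : j = k := by omega
    have : q*(j+1)+j+1 = (q+1)*(j+1)+0 := by ring
    rw [this, V_block _ _ _ _ (by omega)]
    exact B_rel1_last _ _ _ hk hp

theorem V_relT (k p i : ℕ) : relT (cls (V k p i)) (V k p (i+(k+1))) := by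
  obtain ⟨q, j, hj, rfl⟩ := split_i k i
  have : q*(k+1)+j+(k+1) = (q+1)*(k+1)+j := by ring
  rw [this, V_block _ _ _ _ hj, V_block _ _ _ _ hj]
  exact B_relT _ _ _

theorem V_zero (k p : ℕ) : V k p 0 = .inl true := by simp [V, B]

theorem V_first (k p j : ℕ) (h0 : 0 < j) (hj : j < k+1) :
    ∃ b, V k p j = .inr (none, p.testBit (j-1), b) := by
  have := V_block k p 0 j hj
  rw [Nat.zero_mul, Nat.zero_add] at this
  rw [this]
  simp [B, h0.ne']

theorem V_true (k p i : ℕ) : V k p i = .inl true ↔ (p+1)*(k+1) ∣ i := by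
  obtain ⟨q, j, hj, rfl⟩ := split_i k i
  rw [V_block _ _ _ _ hj]
  constructor
  · intro h
    unfold B at h
    split_ifs at h with h1 h2
    simp only [Sum.inl.injEq, decide_eq_true_eq] at h
    subst h1
    exact Nat.mul_dvd_mul_right (Nat.dvd_of_mod_eq_zero h) _
  · intro h
    have h1 : (k+1) ∣ j := (Nat.dvd_add_right (Dvd.intro_left q rfl)).1 (dvd_trans (Dvd.intro_left _ rfl) h)
    obtain rfl : j = 0 := Nat.eq_zero_of_dvd_of_lt h1 hj
    have h2 : (p+1) ∣ q := Nat.dvd_of_mul_dvd_mul_right (Nat.succ_pos k) h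
    simp [B, Nat.mod_eq_zero_of_dvd h2]

/-- uniqueness -/
theorem unique (k : ℕ) (hk : 1 ≤ k) (w : ℕ → A) (l : ℕ) (h0 : 0 < l → w 0 = .inl true)
    (h1 : ∀ i, i + 1 < l → rel1 (w i) (w (i+1)))
    (h2 : ∀ i, i + (k+1) < l → relT (cls (w i)) (w (i+(k+1))))
    (h3 : ∀ i, i < k → i + 1 < l → ¬ isD (w (i+1))) :
    ∃ p, p < 2^k ∧ ∀ i, i < l → w i = V k p i := by
  refine ⟨Nat.ofBits (fun i : Fin k => pbit (w (i+1))), Nat.ofBits_lt_two_pow _, ?_⟩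
  set p := Nat.ofBits (fun i : Fin k => pbit (w (i+1))) with hpdef
  have hp : p < 2^k := Nat.ofBits_lt_two_pow _
  intro i
  induction i using Nat.strong_induction_on with
  | _ i ih =>
  intro hi
  rcases i with _ | i
  · rw [V_zero]; exact h0 hi
  have hprev := ih i (by omega) (by omega)
  have r1 := h1 i hi
  rw [hprev] at r1
  by_cases hik : i + 1 < k + 1
  · obtain ⟨b, hb⟩ := V_first k p (i+1) (by omega) hik
    refine rel_unique' r1 (V_rel1 k p i hk hp) ?_ (h3 i (by omega) hi) ?_ ?_
    · rcases i with _ | i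
      · left; exact V_zero _ _
      · right
        obtain ⟨b, hb⟩ := V_first k p (i+1) (by omega) (by omega)
        exact ⟨_, _, hb⟩
    · rw [hb]; simp [isD]
    · rw [hb]
      rw [Nat.add_sub_cancel, hpdef, Nat.testBit_ofBits_lt _ _ (by omega)]
      rfl
  · obtain ⟨m, hm⟩ : ∃ m, i + 1 = m + (k+1) := ⟨i - k, by omega⟩
    have r2 := h2 m (by omega)
    rw [ih m (by omega) (by omega), ← hm] at r2
    refine rel_unique r1 r2 (V_rel1 k p i hk hp) ?_
    rw [hm]; exact V_relT k p m

inductive St (K r : ℕ) : Type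
  | start | idle | err | fin
  | last (a : A)
  | head (j : Fin K)
  | line (t : T) (j : Fin K)
  | pad (j : Fin r)

def stEquiv (K r : ℕ) : St K r ≃ Fin 4 ⊕ A ⊕ Fin K ⊕ (T × Fin K) ⊕ Fin r where
  toFun
    | .start => .inl 0
    | .idle => .inl 1
    | .err => .inl 2
    | .fin => .inl 3
    | .last a => .inr (.inl a)
    | .head j => .inr (.inr (.inl j))
    | .line t j => .inr (.inr (.inr (.inl (t, j))))
    | .pad j => .inr (.inr (.inr (.inr j)))
  invFun
    | .inl 0 => .start
    | .inl 1 => .idle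
    | .inl 2 => .err
    | .inl 3 => .fin
    | .inr (.inl a) => .last a
    | .inr (.inr (.inl j)) => .head j
    | .inr (.inr (.inr (.inl (t, j)))) => .line t j
    | .inr (.inr (.inr (.inr j))) => .pad j
  left_inv q := by cases q <;> rfl
  right_inv q := by
    rcases q with q | a | j | ⟨t, j⟩ | j
    · fin_cases q <;> rfl
    all_goals rfl

instance (K r : ℕ) : Fintype (St K r) := Fintype.ofEquiv _ (stEquiv K r).symm

theorem card_St (K r : ℕ) : Fintype.card (St K r) = 18 + 6 * K + r := by
  rw [Fintype.card_congr (stEquiv K r)]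
  simp
  ring

inductive Step (K r : ℕ) : St K r → A → St K r → Prop
  | s_idle (a) : Step K r .start a .idle
  | s_last (a) : Step K r .start a (.last a)
  | s_line (a) (j : Fin K) (hj : j.val = 0) : Step K r .start a (.line (cls a) j)
  | s_head (a) (j : Fin K) (hj : j.val = 0) : Step K r .start a (.head j)
  | s_err (a) (h : a ≠ .inl true) : Step K r .start a .err
  | i_idle (a) : Step K r .idle a .idle
  | i_last (a) : Step K r .idle a (.last a)
  | i_line (a) (j : Fin K) (hj : j.val = 0) : Step K r .idle a (.line (cls a) j)
  | i_fin : Step K r .idle (.inl true) .fin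
  | last_err (a b) (h : ¬ rel1 a b) : Step K r (.last a) b .err
  | line_line (t a) (j j' : Fin K) (h : j'.val = j.val + 1) : Step K r (.line t j) a (.line t j')
  | line_err (t a) (j : Fin K) (h : j.val + 1 = K) (h' : ¬ relT t a) : Step K r (.line t j) a .err
  | head_head (a) (j j' : Fin K) (h : j'.val = j.val + 1) : Step K r (.head j) a (.head j')
  | head_err (a) (j : Fin K) (h : j.val + 1 < K) (h' : isD a) : Step K r (.head j) a .err
  | err_err (a) : Step K r .err a .err

def Mach (K r : ℕ) (e : Fin 15 → A) : NFA (Fin 15) (St K r) where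
  step q x := {q' | Step K r q (e x) q'}
  start := {.start}
  accept := {.err, .fin}

def pre (w : ℕ → Fin 15) (i : ℕ) : List (Fin 15) := (List.range i).map w

theorem mem_eval_succ {K r e w i q'} :
    q' ∈ (Mach K r e).eval (pre w (i+1)) ↔
      ∃ q ∈ (Mach K r e).eval (pre w i), Step K r q (e (w i)) q' := by
  unfold pre
  rw [List.range_succ, List.map_append, List.map_singleton, NFA.eval_append_singleton, NFA.mem_stepSet]
  rfl

theorem mem_eval_zero {K r e w q'} : q' ∈ (Mach K r e).eval (pre w 0) ↔ q' = .start := Iff.rfl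

/-- over-approximation of reachable states on a correct word -/
def Inv (K r : ℕ) (u : ℕ → A) (i : ℕ) : St K r → Prop
  | .start => i = 0
  | .idle => 1 ≤ i
  | .err => False
  | .fin => ∃ m, i = m + 2 ∧ u (m+1) = .inl true
  | .last a => ∃ m, i = m + 1 ∧ a = u m
  | .head j => i = j.val + 1
  | .line t j => ∃ m, i = m + 1 + j.val ∧ t = cls (u m)
  | .pad _ => False

theorem inv_of_good (k r : ℕ) (e : Fin 15 → A) (w : ℕ → Fin 15) (u : ℕ → A) (hu : ∀ i, e (w i) = u i)
    (h0 : u 0 = .inl true)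
    (h1 : ∀ i, rel1 (u i) (u (i+1)))
    (h2 : ∀ i, relT (cls (u i)) (u (i+(k+1))))
    (h3 : ∀ i, i < k → ¬ isD (u (i+1))) (i : ℕ) (q) (hq : q ∈ (Mach (k+1) r e).eval (pre w i)) :
    Inv (k+1) r u i q := by
  induction i generalizing q with
  | zero => rw [mem_eval_zero] at hq; subst hq; rfl
  | succ i ih =>
    rw [mem_eval_succ] at hq
    obtain ⟨q0, hq0, hs⟩ := hq
    have hI := ih _ hq0
    rw [hu] at hs
    generalize hx : u i = x at hs
    cases hs with
    | s_idle | i_idle => simp [Inv]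
    | s_last | i_last => exact ⟨i, rfl, hx.symm⟩
    | s_line _ j hj | i_line _ j hj => exact ⟨i, by omega, by rw [hx]⟩
    | s_head _ j hj => simp only [Inv] at hI ⊢; omega
    | s_err _ h => simp only [Inv] at hI; subst hI; exact h (hx ▸ h0)
    | i_fin =>
      simp only [Inv] at hI
      obtain ⟨m, rfl⟩ : ∃ m, i = m + 1 := ⟨i-1, by omega⟩
      exact ⟨m, rfl, hx⟩
    | last_err a _ h =>
      obtain ⟨m, rfl, rfl⟩ := hI
      exact h (hx ▸ h1 m)
    | line_line t _ j j' h =>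
      obtain ⟨m, hm, ht⟩ := hI
      exact ⟨m, by omega, ht⟩
    | line_err t _ j h h' =>
      obtain ⟨m, hm, ht⟩ := hI
      have : i = m + (k+1) := by omega
      subst this; subst ht
      exact h' (hx ▸ h2 m)
    | head_head _ j j' h => simp only [Inv] at hI ⊢; omega
    | head_err _ j h h' =>
      simp only [Inv] at hI
      subst hI; subst hx
      exact h3 j.val (by omega) h'
    | err_err => exact hI

section reach
variable {K r : ℕ} {e : Fin 15 → A} {w : ℕ → Fin 15}

theorem idle_mem (i : ℕ) : St.idle ∈ (Mach K r e).eval (pre w (i+1)) := by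
  induction i with
  | zero => exact mem_eval_succ.2 ⟨.start, rfl, .s_idle _⟩
  | succ i ih => exact mem_eval_succ.2 ⟨_, ih, .i_idle _⟩

theorem last_mem (i : ℕ) : St.last (e (w i)) ∈ (Mach K r e).eval (pre w (i+1)) := by
  cases i with
  | zero => exact mem_eval_succ.2 ⟨.start, rfl, .s_last _⟩
  | succ i => exact mem_eval_succ.2 ⟨_, idle_mem i, .i_last _⟩

theorem line_mem (i j : ℕ) (hj : j < K) :
    St.line (cls (e (w i))) ⟨j, hj⟩ ∈ (Mach K r e).eval (pre w (i+1+j)) := by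
  induction j with
  | zero =>
    cases i with
    | zero => exact mem_eval_succ.2 ⟨.start, rfl, .s_line _ _ rfl⟩
    | succ i => exact mem_eval_succ.2 ⟨_, idle_mem i, .i_line _ _ rfl⟩
  | succ j ih => exact mem_eval_succ.2 ⟨_, ih (by omega), .line_line _ _ _ _ rfl⟩

theorem head_mem (j : ℕ) (hj : j < K) : St.head ⟨j, hj⟩ ∈ (Mach K r e).eval (pre w (j+1)) := by
  induction j with
  | zero => exact mem_eval_succ.2 ⟨.start, rfl, .s_head _ _ rfl⟩
  | succ j ih => exact mem_eval_succ.2 ⟨_, ih (by omega), .head_head _ _ _ rfl⟩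

theorem err_mono (i l : ℕ) (h : i ≤ l) (hi : St.err ∈ (Mach K r e).eval (pre w i)) :
    St.err ∈ (Mach K r e).eval (pre w l) := by
  induction l, h using Nat.le_induction with
  | base => exact hi
  | succ l _ ih => exact mem_eval_succ.2 ⟨_, ih, .err_err _⟩

end reach

theorem accepted_of_dvd (k r : ℕ) (hk : 1 ≤ k) (e : Fin 15 → A) (w : ℕ → Fin 15) (l : ℕ)
    (hl : ∀ p, p < 2^k → (p+1)*(k+1) ∣ l + 1) : pre w (l+2) ∈ (Mach (k+1) r e).accepts := by
  by_cases herr : St.err ∈ (Mach (k+1) r e).eval (pre w (l+2))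
  · exact ⟨.err, Or.inl rfl, herr⟩
  have no : ∀ i, i ≤ l+2 → St.err ∉ (Mach (k+1) r e).eval (pre w i) :=
    fun i hi h => herr (err_mono i _ hi h)
  obtain ⟨p, hp, hw⟩ := unique k hk (fun i => e (w i)) (l+2)
    (by
      intro _
      by_contra h
      exact no 1 (by omega) (mem_eval_succ.2 ⟨.start, rfl, .s_err _ h⟩))
    (by
      intro i hi
      by_contra h
      exact no (i+2) (by omega) (mem_eval_succ.2 ⟨_, last_mem i, .last_err _ _ h⟩))
    (by
      intro i hi
      by_contra h
      have hm := line_mem (K := k+1) (r := r) (e := e) (w := w) i k (by omega)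
      rw [show i + 1 + k = i + (k+1) by ring] at hm
      exact no (i+(k+1)+1) (by omega) (mem_eval_succ.2 ⟨_, hm, .line_err _ _ _ rfl h⟩))
    (by
      intro i hik hi h
      exact no (i+2) (by omega) (mem_eval_succ.2 ⟨_, head_mem i (by omega), .head_err _ _ (by simpa using hik) h⟩))
  have hlast := hw (l+1) (by omega)
  rw [(V_true k p (l+1)).2 (hl p hp)] at hlast
  refine ⟨.fin, Or.inr rfl, mem_eval_succ.2 ⟨_, idle_mem l, ?_⟩⟩
  rw [hlast]
  exact .i_fin

theorem dvd_of_accepted (k r : ℕ) (hk : 1 ≤ k) (e : Fin 15 → A) (he : Function.Surjective e) (p l : ℕ)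
    (hp : p < 2^k) (h : IsUnivLength (Mach (k+1) r e).accepts l) :
    ∃ m, l = m + 2 ∧ (p+1)*(k+1) ∣ m + 1 := by
  choose g hg using he
  obtain ⟨q, hq, hq'⟩ := h (pre (fun i => g (V k p i)) l) (by simp [pre])
  have := inv_of_good k r e (fun i => g (V k p i)) (V k p) (fun i => hg _) (V_zero _ _)
    (fun i => V_rel1 k p i hk hp) (fun i => V_relT k p i)
    (fun i hi => by
      obtain ⟨b, hb⟩ := V_first k p (i+1) (by omega) (by omega)
      rw [hb]; simp [isD]) l q hq'
  rcases hq with rfl | rfl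
  · exact this.elim
  · obtain ⟨m, hm, hv⟩ := this
    exact ⟨m, hm, (V_true _ _ _).1 hv⟩

theorem exists_code : ∃ e : Fin 15 → A, Function.Surjective e := by
  obtain ⟨f⟩ : Nonempty (A ↪ Fin 15) := Function.Embedding.nonempty_of_card_le (by simp)
  exact ⟨Function.invFun f, Function.invFun_surjective f.injective⟩

theorem list_eq_pre (v : List (Fin 15)) : pre (fun i => v.getD i 0) v.length = v := by
  apply List.ext_getElem
  · simp [pre]
  · intro i h1 h2
    simp [pre, h2]

end UnivLen
/-- For every `ε > 0` and all sufficiently large `n` there is an `n`-state NFA over a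
15-letter alphabet having a universal length, whose minimal universality length is at least
`exp ((1 - ε) * 2^(n/11))`. -/
theorem nfa_min_univ_length_lower_bound :
    ∀ ε : ℝ, 0 < ε → ∃ N : ℕ, ∀ n : ℕ, N ≤ n →
      ∃ (Q : Type) (inst : Fintype Q), @Fintype.card Q inst = n ∧
        ∃ M : NFA (Fin 15) Q,
          (∃ ℓ : ℕ, IsUnivLength M.accepts ℓ) ∧
          Real.exp ((1 - ε) * (2 : ℝ) ^ ((n : ℝ) / 11)) ≤
            ((sInf {ℓ : ℕ | IsUnivLength M.accepts ℓ} : ℕ) : ℝ) := by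
  intro ε hε
  refine ⟨200, fun n hn => ?_⟩
  obtain ⟨k, r, hkr, hk, hnk⟩ : ∃ k r : ℕ, 18 + 6 * (k+1) + r = n ∧ 3 ≤ k ∧ n ≤ 11 * (k-2) :=
    ⟨(n-24)/6, (n-24)%6, by omega, by omega, by omega⟩
  obtain ⟨e, he⟩ := UnivLen.exists_code
  have hex : ∃ ℓ, IsUnivLength (UnivLen.Mach (k+1) r e).accepts ℓ := by
    have hpos : 0 < (2^k).factorial * (k+1) := by positivity
    refine ⟨((2^k).factorial * (k+1) - 1) + 2, fun v hv => ?_⟩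
    have := UnivLen.accepted_of_dvd k r (by omega) e (fun i => v.getD i 0) ((2^k).factorial * (k+1) - 1)
      (fun p hp => by
        rw [Nat.sub_add_cancel hpos]
        exact Nat.mul_dvd_mul_right (Nat.dvd_factorial (Nat.succ_pos p) hp) _)
    rwa [← hv, UnivLen.list_eq_pre] at this
  refine ⟨UnivLen.St (k+1) r, inferInstance, by rw [UnivLen.card_St, hkr], UnivLen.Mach (k+1) r e, hex, ?_⟩
  have hmin : IsUnivLength (UnivLen.Mach (k+1) r e).accepts
      (sInf {ℓ : ℕ | IsUnivLength (UnivLen.Mach (k+1) r e).accepts ℓ}) := Nat.sInf_mem hex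
  generalize sInf {ℓ : ℕ | IsUnivLength (UnivLen.Mach (k+1) r e).accepts ℓ} = l at hmin ⊢
  obtain ⟨m, rfl, -⟩ := UnivLen.dvd_of_accepted k r (by omega) e he 0 l (by positivity) hmin
  have hb := UnivLen.lcmBound k (m+1) (by omega) (by omega) (fun d hd hd' => by
    obtain ⟨m', hm', hdv⟩ := UnivLen.dvd_of_accepted k r (by omega) e he (d-1) _ (by omega) hmin
    obtain rfl : m = m' := by omega
    rw [Nat.sub_add_cancel hd] at hdv
    exact dvd_trans (Dvd.intro _ rfl) hdv)
  refine (UnivLen.realBound n k (m+1) ε hε hk hnk hb).trans ?_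
  push_cast; linarith
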